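/- Let Φ assign to every finite vector with nonnegative entries (of any length) a value Φ(p) ∈ ℝ≥0, invariantly under permuting entries and under appending zero entries, such that Φ(p ⊕ q) = Φ(p) + Φ(q) and Φ(p ⊗ q) = Φ(p)·Φ(q) for all p, q, Φ of the single-entry vector (1) is 1, and Φ of the single-entry vector (0) is 0. (i) If Φ is such that p ≽₁ q implies Φ(p) ≤ Φ(q), then there exists α ∈ [0,1] with Φ = f_α; conversely, each f_α with α ∈ [0,1] has all of these properties. (ii) If Φ is such that p ≽₁ q implies Φ(p) ≥ Φ(q), then there exists α ∈ [1,∞) with Φ = f_α; conversely, each f_α with α ∈ [1,∞) has all of these properties. -/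

import Mathlib

open scoped BigOperators NNReal

noncomputable section

/-- A probability vector on a finite index type. -/
def IsProbVec {ι : Type*} [Fintype ι] (p : ι → ℝ) : Prop :=
  (∀ i, 0 ≤ p i) ∧ ∑ i, p i = 1

/-- A (column-)stochastic matrix: nonnegative entries, every column sums to `1`. -/
def IsStochastic {ι κ : Type*} [Fintype ι] [Fintype κ] (T : ι → κ → ℝ) : Prop :=
  (∀ i j, 0 ≤ T i j) ∧ ∀ j, ∑ i, T i j = 1

/-- Matrix–vector multiplication. -/
def matVec {ι κ : Type*} [Fintype κ] (T : ι → κ → ℝ) (v : κ → ℝ) : ι → ℝ :=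
  fun i => ∑ j, T i j * v j

/-- Kronecker product of two vectors. -/
def kron {ι κ : Type*} (p : ι → ℝ) (q : κ → ℝ) : ι × κ → ℝ :=
  fun x => p x.1 * q x.2

/-- `n`-fold Kronecker power of a vector. -/
def kpow {ι : Type*} (p : ι → ℝ) (n : ℕ) : (Fin n → ι) → ℝ :=
  fun f => ∏ j, p (f j)

/-- Kronecker product reindexed along `Fin (m * n)`. -/
def kronFin {m n : ℕ} (p : Fin m → ℝ) (q : Fin n → ℝ) : Fin (m * n) → ℝ :=
  fun i => kron p q (finProdFinEquiv.symm i)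

/-- The sum of the `k` largest entries of a nonnegative vector, expressed as the
largest sum over subsets of cardinality at most `k`. -/
def topSum {ι : Type*} [Fintype ι] (p : ι → ℝ) (k : ℕ) : ℝ :=
  ⨆ s ∈ {s : Finset ι | s.card ≤ k}, ∑ i ∈ s, p i

/-- Majorization for nonnegative vectors (possibly of different lengths):
equal total sums, and for each `k` the sum of the `k` largest entries of `p` is
at least that of `q`. -/
def Majorizes {ι κ : Type*} [Fintype ι] [Fintype κ] (p : ι → ℝ) (q : κ → ℝ) : Prop :=
  (∑ i, p i = ∑ j, q j) ∧ ∀ k : ℕ, topSum q k ≤ topSum p k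

/-- The size of the support, `‖p‖₀`. -/
def supp0 {ι : Type*} [Fintype ι] (p : ι → ℝ) : ℕ :=
  (Finset.univ.filter fun i => p i ≠ 0).card

/-- Entrywise nonnegativity. -/
def NonnegVec {n : ℕ} (p : Fin n → ℝ) : Prop := ∀ i, 0 ≤ p i

/-- The modified majorization preorder `≽₀,₁`: majorization plus equality of
support sizes. -/
def MajMod {ι κ : Type*} [Fintype ι] [Fintype κ] (p : ι → ℝ) (q : κ → ℝ) : Prop :=
  Majorizes p q ∧ supp0 p = supp0 q

/-- `f_α(p) = ∑_{i ∈ supp p} (p i)^α`. -/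
def fA {ι : Type*} [Fintype ι] (α : ℝ) (p : ι → ℝ) : ℝ :=
  ∑ i, if p i = 0 then 0 else p i ^ α

/-- Shannon entropy (the terms with `p i = 0` vanish). -/
def H1ent {ι : Type*} [Fintype ι] (p : ι → ℝ) : ℝ := -∑ i, p i * Real.log (p i)

/-- `H₀'(p) = ∑_{i ∈ supp p} log p_i`. -/
def H0' {ι : Type*} [Fintype ι] (p : ι → ℝ) : ℝ :=
  ∑ i, if p i = 0 then 0 else Real.log (p i)

/-- Rényi entropy of order `α` (with `α = 1` the Shannon entropy). -/
def Hent {ι : Type*} [Fintype ι] (α : ℝ) (p : ι → ℝ) : ℝ :=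
  if α = 1 then -∑ i, p i * Real.log (p i)
  else (1 / (1 - α)) * Real.log (∑ i, if p i = 0 then 0 else p i ^ α)

/-- Min-entropy `H_∞(p) = - log max_i p_i`. -/
def HentInf {ι : Type*} [Fintype ι] (p : ι → ℝ) : ℝ := -Real.log (⨆ i, p i)

/-- Kullback–Leibler divergence (the terms with `p i = 0` vanish). -/
def KL {n : ℕ} (p q : Fin n → ℝ) : ℝ :=
  ∑ i, p i * Real.log (p i / q i)

/-- Rényi divergence of order `α` for vectors with common support. -/
def Renyi {n : ℕ} (α : ℝ) (p q : Fin n → ℝ) : ℝ :=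
  if α = 1 then ∑ i, p i * Real.log (p i / q i)
  else (1 / (α - 1)) * Real.log (∑ i, if p i = 0 then 0 else p i ^ α * q i ^ (1 - α))

/-- Max-divergence `D_∞(p‖q) = max_{i ∈ supp q} log (p_i / q_i)`. -/
def RenyiInf {n : ℕ} (p q : Fin n → ℝ) : ℝ :=
  ⨆ i ∈ Finset.univ.filter (fun i => q i ≠ 0), Real.log (p i / q i)

/-- Rényi divergence with values in the extended reals `[0, ∞]`. -/
def RenyiE {n : ℕ} (α : ℝ) (p q : Fin n → ℝ) : EReal :=
  if α = 1 then
    (if ∀ i, p i ≠ 0 → q i ≠ 0 then ((∑ i, p i * Real.log (p i / q i) : ℝ) : EReal) else ⊤)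
  else if α < 1 then
    (if ∃ i, p i ≠ 0 ∧ q i ≠ 0 then
      (((1 / (α - 1)) *
        Real.log (∑ i, if p i = 0 ∨ q i = 0 then 0 else p i ^ α * q i ^ (1 - α)) : ℝ) : EReal)
    else (⊤ : EReal))
  else
    (if ∀ i, p i ≠ 0 → q i ≠ 0 then
      (((1 / (α - 1)) *
        Real.log (∑ i, if p i = 0 then 0 else p i ^ α * q i ^ (1 - α)) : ℝ) : EReal)
    else (⊤ : EReal))

/-- The common support of a tuple of vectors. -/
def suppIdx {d n : ℕ} (P : Fin d → Fin n → ℝ) : Finset (Fin n) :=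
  Finset.univ.filter fun i => ∃ k, P k i ≠ 0

/-- `f_α(P) = ∑_{i ∈ I} ∏_k (p_i^{(k)})^{α_k}` with `I` the common support. -/
def fMat {d n : ℕ} (α : Fin d → ℝ) (P : Fin d → Fin n → ℝ) : ℝ :=
  ∑ i ∈ suppIdx P, ∏ k, P k i ^ α k

/-- The matrix `α`-divergence `D_α`. -/
def Dmat {d n : ℕ} (α : Fin d → ℝ) (P : Fin d → Fin n → ℝ) : ℝ :=
  (1 / ((⨆ k, α k) - 1)) * Real.log (∑ i ∈ suppIdx P, ∏ k, P k i ^ α k)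

/-- The tropical matrix divergence `D^𝕋_β`. -/
def DmatT {d n : ℕ} (β : Fin d → ℝ) (P : Fin d → Fin n → ℝ) : ℝ :=
  (1 / (⨆ k, β k)) * Real.log (⨆ i ∈ suppIdx P, ∏ k, P k i ^ β k)

/-- Membership in `A₊`: entries summing to `1`, all nonnegative. -/
def memAplus {d : ℕ} (α : Fin d → ℝ) : Prop := (∑ k, α k = 1) ∧ ∀ k, 0 ≤ α k

/-- Membership in `A₋`: entries summing to `1`, one entry `≥ 1`, the others `≤ 0`. -/
def memAminus {d : ℕ} (α : Fin d → ℝ) : Prop :=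
  (∑ k, α k = 1) ∧ ∃ k, 1 ≤ α k ∧ ∀ l, l ≠ k → α l ≤ 0

/-- Membership in `B₋`: entries summing to `0`, one entry `≥ 0`, the others `≤ 0`. -/
def memBminus {d : ℕ} (β : Fin d → ℝ) : Prop :=
  (∑ k, β k = 0) ∧ ∃ k, 0 ≤ β k ∧ ∀ l, l ≠ k → β l ≤ 0

/-- `α` is none of the standard basis vectors `e₁, …, e_d`. -/
def notBasis {d : ℕ} (α : Fin d → ℝ) : Prop := ∀ k, α ≠ Pi.single k 1

/-- ℓ¹-distance of two vectors, padding with zeros to a common length. -/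
def l1PadDist {m n : ℕ} (p : Fin m → ℝ) (q : Fin n → ℝ) : ℝ :=
  ∑ i : Fin (max m n),
    |(if h : (i : ℕ) < m then p ⟨(i : ℕ), h⟩ else 0) -
      (if h : (i : ℕ) < n then q ⟨(i : ℕ), h⟩ else 0)|

/-- Index type of the direct sum `⨁_{s=0}^{n-1} p^{⊗(n-1-s)} ⊗ q^{⊗s}`. -/
abbrev TrickIdx (m m' n : ℕ) : Type :=
  Σ s : Fin n, (Fin (n - 1 - (s : ℕ)) → Fin m) × (Fin (s : ℕ) → Fin m')

/-- The standard catalyst `(1/n) ⨁_{s=0}^{n-1} p^{⊗(n-1-s)} ⊗ q^{⊗s}`. -/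
def trick {m m' : ℕ} (p : Fin m → ℝ) (q : Fin m' → ℝ) (n : ℕ) : TrickIdx m m' n → ℝ :=
  fun x => (1 / (n : ℝ)) * (kpow p (n - 1 - (x.1 : ℕ)) x.2.1 * kpow q (x.1 : ℕ) x.2.2)

/-- A valid tuple: nonnegative entries and common support across the tuple. -/
def TupOK {d n : ℕ} (P : Fin d → Fin n → ℝ) : Prop :=
  (∀ k i, 0 ≤ P k i) ∧ ∀ k l i, P k i ≠ 0 ↔ P l i ≠ 0

/-- Matrix majorization of tuples: a single stochastic matrix carrying each column
of `P` to the corresponding column of `Q`. -/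
def TupMaj {d m n : ℕ} (P : Fin d → Fin m → ℝ) (Q : Fin d → Fin n → ℝ) : Prop :=
  ∃ T : Fin n → Fin m → ℝ, IsStochastic T ∧ ∀ k, matVec T (P k) = Q k

/-- The basic properties of a normalized additive and multiplicative
functional on finite nonnegative vectors of arbitrary length: nonnegative
values, permutation invariance, invariance under appending a zero entry,
additivity under direct sums, multiplicativity under Kronecker products, and
normalization on the single-entry vectors `(1)` and `(0)`. -/
def PhiBase (Φ : ∀ n : ℕ, (Fin n → ℝ) → ℝ) : Prop :=
  (∀ (n : ℕ) (p : Fin n → ℝ), NonnegVec p → 0 ≤ Φ n p) ∧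
  (∀ (n : ℕ) (σ : Equiv.Perm (Fin n)) (p : Fin n → ℝ), NonnegVec p →
    Φ n (p ∘ σ) = Φ n p) ∧
  (∀ (n : ℕ) (p : Fin n → ℝ), NonnegVec p → Φ (n + 1) (Fin.snoc p 0) = Φ n p) ∧
  (∀ (m n : ℕ) (p : Fin m → ℝ) (q : Fin n → ℝ), NonnegVec p → NonnegVec q →
    Φ (m + n) (Fin.append p q) = Φ m p + Φ n q) ∧
  (∀ (m n : ℕ) (p : Fin m → ℝ) (q : Fin n → ℝ), NonnegVec p → NonnegVec q →
    Φ (m * n) (kronFin p q) = Φ m p * Φ n q) ∧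
  Φ 1 (fun _ => 1) = 1 ∧ Φ 1 (fun _ => 0) = 0

/-!
By additivity `Φ` is determined by its values `φ x` on single entries, and `φ` is multiplicative.
The comparison `(2 - x, x) ≽₁ (1, 1)`, respectively `(1, 0) ≽₁ (x, 1 - x)`, bounds `φ` on `(0, 1]`.
A multiplicative function bounded there is at most `1` there, since `φ x ^ n = φ (x ^ n)`; hence it
is monotone, and `log ∘ φ ∘ exp` is monotone and additive, so it is linear and `φ` is a power.
Comparing `(2, 0) ≽₁ (1, 1)` locates the exponent.

Conversely, monotonicity of `f_α` is Karamata's inequality. Majorization gives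
`∑ i, min (p i) t ≤ ∑ j, min (q j) t` for all `t ≥ 0`, and on any finite set of nodes a convex
function vanishing at `0` is a combination of the increments of `min · t` between consecutive nodes,
with increasing coefficients; summation by parts concludes.
-/

open Finset

section Majorization

variable {ι κ : Type*} [Fintype ι] [Fintype κ]

lemma sum_le_topSum (p : ι → ℝ) {s : Finset ι} {k : ℕ} (hs : #s ≤ k) :
    ∑ i ∈ s, p i ≤ topSum p k := by
  refine le_ciSup_of_le (Set.finite_range _).bddAbove s ?_
  exact (ciSup_pos (f := fun _ => ∑ i ∈ s, p i) hs).ge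

-- In `topSum` the subsets with more than `k` elements contribute `sSup ∅ = 0`, whence `0 ≤ B`.
lemma topSum_le {p : ι → ℝ} {k : ℕ} {B : ℝ} (hB : 0 ≤ B)
    (h : ∀ s : Finset ι, #s ≤ k → ∑ i ∈ s, p i ≤ B) : topSum p k ≤ B :=
  Real.iSup_le (fun s => Real.iSup_le (h s) hB) hB

lemma topSum_le_sum_sub_min_add (p : ι → ℝ) (k : ℕ) {t : ℝ} (ht : 0 ≤ t) :
    topSum p k ≤ ∑ i, (p i - min (p i) t) + k * t := by
  have hnonneg (i : ι) : 0 ≤ p i - min (p i) t := sub_nonneg.2 (min_le_left _ _)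
  refine topSum_le (add_nonneg (sum_nonneg fun i _ => hnonneg i) (by positivity)) fun s hs => ?_
  calc ∑ i ∈ s, p i ≤ ∑ i ∈ s, (p i - min (p i) t + t) :=
        sum_le_sum fun i _ => by linarith [min_le_right (p i) t]
    _ = ∑ i ∈ s, (p i - min (p i) t) + #s * t := by rw [sum_add_distrib, sum_const, nsmul_eq_mul]
    _ ≤ ∑ i, (p i - min (p i) t) + k * t := by
        gcongr
        · exact fun i _ _ => hnonneg i
        · exact subset_univ s

lemma exists_sum_sub_min_add_le_topSum (q : κ → ℝ) (t : ℝ) :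
    ∃ k : ℕ, ∑ j, (q j - min (q j) t) + k * t ≤ topSum q k := by
  set s : Finset κ := {j | t < q j} with hs
  refine ⟨#s, le_of_eq_of_le ?_ (sum_le_topSum q le_rfl)⟩
  have hsum : ∑ j, (q j - min (q j) t) = ∑ j ∈ s, (q j - t) := by
    rw [hs, sum_filter]
    refine sum_congr rfl fun j _ => ?_
    split_ifs with hj
    · rw [min_eq_right hj.le]
    · rw [min_eq_left (not_lt.1 hj), sub_self]
  rw [hsum, sum_sub_distrib, sum_const, nsmul_eq_mul, sub_add_cancel]

lemma Majorizes.sum_min_le {p : ι → ℝ} {q : κ → ℝ} (h : Majorizes p q) {t : ℝ} (ht : 0 ≤ t) :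
    ∑ i, min (p i) t ≤ ∑ j, min (q j) t := by
  obtain ⟨k, hq⟩ := exists_sum_sub_min_add_le_topSum q t
  have hp := topSum_le_sum_sub_min_add p k ht
  rw [sum_sub_distrib] at hp hq
  linarith [h.1, h.2 k]

lemma majorizes_of_forall_exists_card_le {p : ι → ℝ} {q : κ → ℝ} (hsum : ∑ i, p i = ∑ j, q j)
    (h : ∀ s : Finset κ, ∃ s' : Finset ι, #s' ≤ #s ∧ ∑ j ∈ s, q j ≤ ∑ i ∈ s', p i) :
    Majorizes p q := by
  refine ⟨hsum, fun k => topSum_le ?_ fun s hs => ?_⟩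
  · simpa using sum_le_topSum p (s := ∅) (Nat.zero_le k)
  · obtain ⟨s', hcard, hle⟩ := h s
    exact hle.trans (sum_le_topSum p (hcard.trans hs))

lemma majorizes_pair {a b c d : ℝ} (hsum : a + b = c + d) (hc : c ≤ a) (hd : d ≤ a) :
    Majorizes ![a, b] ![c, d] := by
  refine majorizes_of_forall_exists_card_le (by simpa using hsum) fun s => ?_
  obtain rfl | ⟨i, rfl⟩ | rfl : s = ∅ ∨ (∃ i, s = {i}) ∨ s = univ := by
    revert s; decide
  · exact ⟨∅, by simp⟩
  · refine ⟨{0}, by simp, ?_⟩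
    fin_cases i <;> simpa
  · exact ⟨univ, by simp, by simpa using hsum.ge⟩

end Majorization

section Karamata

lemma exists_strictMono_subset_image_Iic {α : Type*} [LinearOrder α] [NoMaxOrder α]
    (s : Finset α) : ∀ a, (∀ y ∈ s, a ≤ y) →
      ∃ x : ℕ → α, StrictMono x ∧ x 0 = a ∧ ∃ N, ↑s ⊆ x '' Set.Iic N := by
  induction s using Finset.induction_on_min with
  | empty =>
    intro a _
    obtain ⟨x, hx, hx0⟩ := Nat.exists_strictMono' a
    exact ⟨x, hx, hx0, 0, by simp⟩
  | insert m s hm ih =>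
    intro a ha
    obtain ⟨x, hx, hx0, N, hs⟩ := ih m fun y hy => (hm y hy).le
    rw [coe_insert]
    rcases (ha m (mem_insert_self m s)).eq_or_lt with rfl | ham
    · exact ⟨x, hx, hx0, N, Set.insert_subset ⟨0, N.zero_le, hx0⟩ hs⟩
    · refine ⟨fun k => k.casesOn a x, strictMono_nat_of_lt_succ ?_, rfl, N + 1,
        Set.insert_subset ⟨1, N.succ_pos, hx0⟩ (hs.trans ?_)⟩
      · rintro (_ | k)
        · exact ham.trans_eq hx0.symm
        · exact hx k.lt_succ_self
      · rintro _ ⟨k, hk, rfl⟩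
        exact ⟨k + 1, Nat.succ_le_succ hk, rfl⟩

lemma sum_range_mul_sub_nonneg {s d : ℕ → ℝ} (hs : Monotone s) (hd : ∀ k, d k ≤ 0)
    (hd0 : d 0 = 0) {n : ℕ} (hdn : d n = 0) :
    0 ≤ ∑ k ∈ range n, s k * (d (k + 1) - d k) := by
  suffices h : ∀ n, s n * d n ≤ ∑ k ∈ range n, s k * (d (k + 1) - d k) by
    simpa [hdn] using h n
  intro n
  induction n with
  | zero => simp [hd0]
  | succ n ih =>
    rw [sum_range_succ]
    linarith [mul_le_mul_of_nonpos_right (hs n.le_succ) (hd (n + 1))]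

lemma monotone_slope_of_convexOn {g : ℝ → ℝ} {S : Set ℝ} (hg : ConvexOn ℝ S g) {x : ℕ → ℝ}
    (hx : StrictMono x) (hxS : ∀ k, x k ∈ S) : Monotone fun k => slope g (x k) (x (k + 1)) := by
  refine monotone_nat_of_le_succ fun k => ?_
  simp only [slope_def_field]
  exact hg.slope_mono_adjacent (hxS k) (hxS (k + 2)) (hx k.lt_succ_self) (hx (k + 1).lt_succ_self)

lemma sum_range_slope_mul_min_sub (g : ℝ → ℝ) {x : ℕ → ℝ} (hx : StrictMono x) {n N : ℕ}
    (hn : n ≤ N) :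
    ∑ k ∈ range N, slope g (x k) (x (k + 1)) * (min (x n) (x (k + 1)) - min (x n) (x k)) =
      g (x n) - g (x 0) := by
  have hterm (k : ℕ) : slope g (x k) (x (k + 1)) * (min (x n) (x (k + 1)) - min (x n) (x k)) =
      g (min (x n) (x (k + 1))) - g (min (x n) (x k)) := by
    rcases lt_or_ge k n with hk | hk
    · rw [min_eq_right (hx.monotone hk), min_eq_right (hx.monotone hk.le), mul_comm]
      exact sub_smul_slope g _ _
    · rw [min_eq_left (hx.monotone hk), min_eq_left (hx.monotone (hk.trans k.le_succ))]
      simp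
  rw [sum_congr rfl fun k _ => hterm k, sum_range_sub fun k => g (min (x n) (x k)),
    min_eq_left (hx.monotone hn), min_eq_right (hx.monotone n.zero_le)]

variable {ι κ : Type*} [Fintype ι] [Fintype κ] {p : ι → ℝ} {q : κ → ℝ}

lemma sum_sub_eq_sum_range_slope_mul (g : ℝ → ℝ) {x : ℕ → ℝ} (hx : StrictMono x) {N : ℕ}
    (hp : ∀ i, p i ∈ x '' Set.Iic N) :
    ∑ i, (g (p i) - g (x 0)) = ∑ k ∈ range N,
      slope g (x k) (x (k + 1)) * (∑ i, min (p i) (x (k + 1)) - ∑ i, min (p i) (x k)) := by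
  simp only [← sum_sub_distrib, mul_sum]
  rw [sum_comm]
  refine sum_congr rfl fun i _ => ?_
  obtain ⟨n, hn, hpi⟩ := hp i
  rw [← hpi, sum_range_slope_mul_min_sub g hx hn]

theorem Majorizes.sum_le_sum_of_convexOn (h : Majorizes p q) (hp : ∀ i, 0 ≤ p i)
    (hq : ∀ j, 0 ≤ q j) {g : ℝ → ℝ} (hg : ConvexOn ℝ (Set.Ici 0) g) (hg0 : g 0 = 0) :
    ∑ j, g (q j) ≤ ∑ i, g (p i) := by
  obtain ⟨x, hx, hx0, N, hpqx⟩ :=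
    exists_strictMono_subset_image_Iic (univ.image p ∪ univ.image q) 0 (by
      simp only [mem_union, mem_image, mem_univ, true_and]
      rintro _ (⟨i, rfl⟩ | ⟨j, rfl⟩)
      exacts [hp i, hq j])
  have hpx (i : ι) : p i ∈ x '' Set.Iic N := hpqx (by simp)
  have hqx (j : κ) : q j ∈ x '' Set.Iic N := hpqx (by simp)
  have hxnn (k : ℕ) : 0 ≤ x k := hx0.ge.trans (hx.monotone k.zero_le)
  have hle {y : ℝ} (hy : y ∈ x '' Set.Iic N) : y ≤ x N := by
    obtain ⟨n, hn, rfl⟩ := hy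
    exact hx.monotone hn
  have hsum (k : ℕ) : ∑ i, min (p i) (x k) - ∑ j, min (q j) (x k) ≤ 0 :=
    sub_nonpos.2 (h.sum_min_le (hxnn k))
  have hsum0 : ∑ i, min (p i) (x 0) - ∑ j, min (q j) (x 0) = 0 := by simp [hx0, hp, hq]
  have hsumN : ∑ i, min (p i) (x N) - ∑ j, min (q j) (x N) = 0 := by
    simp [hle (hpx _), hle (hqx _), h.1]
  have hparts := sum_range_mul_sub_nonneg (monotone_slope_of_convexOn hg hx hxnn) hsum hsum0 hsumN
  have hgp := sum_sub_eq_sum_range_slope_mul g hx hpx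
  have hgq := sum_sub_eq_sum_range_slope_mul g hx hqx
  simp only [hx0, hg0, sub_zero] at hgp hgq
  rw [← sub_nonneg, hgp, hgq, ← sum_sub_distrib]
  simpa only [← mul_sub, sub_sub_sub_comm] using hparts

theorem Majorizes.sum_le_sum_of_concaveOn (h : Majorizes p q) (hp : ∀ i, 0 ≤ p i)
    (hq : ∀ j, 0 ≤ q j) {g : ℝ → ℝ} (hg : ConcaveOn ℝ (Set.Ici 0) g) (hg0 : g 0 = 0) :
    ∑ i, g (p i) ≤ ∑ j, g (q j) := by
  simpa using h.sum_le_sum_of_convexOn hp hq hg.neg (by simp [hg0])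

end Karamata

section PowerSums

lemma concaveOn_ite_eq_zero {f : ℝ → ℝ} (hf : ConcaveOn ℝ (Set.Ici 0) f) (hf0 : 0 ≤ f 0) :
    ConcaveOn ℝ (Set.Ici 0) fun x => if x = 0 then 0 else f x := by
  have hle {x : ℝ} : (if x = 0 then 0 else f x) ≤ f x := by
    split_ifs with hx
    exacts [hx ▸ hf0, le_rfl]
  refine ⟨hf.1, fun x hx y hy a b ha hb hab => ?_⟩
  simp only [smul_eq_mul]
  by_cases hxy : a * x + b * y = 0
  · obtain ⟨hax, hby⟩ := (add_eq_zero_iff_of_nonneg (mul_nonneg ha hx) (mul_nonneg hb hy)).1 hxy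
    rcases mul_eq_zero.1 hax with rfl | rfl <;> rcases mul_eq_zero.1 hby with rfl | rfl <;> simp
  · rw [if_neg hxy]
    exact (add_le_add (mul_le_mul_of_nonneg_left hle ha) (mul_le_mul_of_nonneg_left hle hb)).trans
      (hf.2 hx hy ha hb hab)

lemma convexOn_ite_rpow {α : ℝ} (hα : 1 ≤ α) :
    ConvexOn ℝ (Set.Ici 0) fun x : ℝ => if x = 0 then 0 else x ^ α := by
  refine (convexOn_rpow hα).congr fun x _ => ?_
  split_ifs with hx
  · simpa only [hx] using Real.zero_rpow (zero_lt_one.trans_le hα).ne'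
  · rfl

lemma Majorizes.fA_le_fA_of_le_one {ι κ : Type*} [Fintype ι] [Fintype κ] {p : ι → ℝ} {q : κ → ℝ}
    (h : Majorizes p q) (hp : ∀ i, 0 ≤ p i) (hq : ∀ j, 0 ≤ q j) {α : ℝ} (hα₀ : 0 ≤ α)
    (hα₁ : α ≤ 1) : fA α p ≤ fA α q :=
  h.sum_le_sum_of_concaveOn hp hq
    (concaveOn_ite_eq_zero (Real.concaveOn_rpow hα₀ hα₁) (Real.rpow_nonneg le_rfl α)) (if_pos rfl)

lemma Majorizes.fA_le_fA_of_one_le {ι κ : Type*} [Fintype ι] [Fintype κ] {p : ι → ℝ} {q : κ → ℝ}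
    (h : Majorizes p q) (hp : ∀ i, 0 ≤ p i) (hq : ∀ j, 0 ≤ q j) {α : ℝ} (hα : 1 ≤ α) :
    fA α q ≤ fA α p :=
  h.sum_le_sum_of_convexOn hp hq (convexOn_ite_rpow hα) (if_pos rfl)

lemma phiBase_sum_apply {φ : ℝ → ℝ} (hnonneg : ∀ x, 0 ≤ x → 0 ≤ φ x)
    (hmul : ∀ x y, 0 ≤ x → 0 ≤ y → φ (x * y) = φ x * φ y) (h1 : φ 1 = 1) (h0 : φ 0 = 0) :
    PhiBase fun _ p => ∑ i, φ (p i) := by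
  refine ⟨fun n p hp => sum_nonneg fun i _ => hnonneg _ (hp i),
    fun n σ p _ => Equiv.sum_comp σ fun i => φ (p i), fun n p _ => ?_, fun m n p q _ _ => ?_,
    fun m n p q hp hq => ?_, by simpa using h1, by simpa using h0⟩
  · simp [Fin.sum_univ_castSucc, h0]
  · simp [Fin.sum_univ_add]
  · calc ∑ i, φ (kronFin p q i) = ∑ x, φ (kron p q x) :=
          Equiv.sum_comp finProdFinEquiv.symm fun x => φ (kron p q x)
      _ = ∑ i, ∑ j, φ (p i) * φ (q j) := by
          simp only [Fintype.sum_prod_type, kron, hmul _ _ (hp _) (hq _)]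
      _ = (∑ i, φ (p i)) * ∑ j, φ (q j) := (sum_mul_sum _ _ _ _).symm

lemma phiBase_fA (α : ℝ) : PhiBase fun _ p => fA α p := by
  refine phiBase_sum_apply (φ := fun x => if x = 0 then 0 else x ^ α) (fun x hx => ?_)
    (fun x y hx hy => ?_) (by simp) (if_pos rfl)
  · split_ifs
    exacts [le_rfl, Real.rpow_nonneg hx α]
  · simp only [mul_eq_zero, Real.mul_rpow hx hy]
    split_ifs <;> simp_all

lemma fA_pair_two_zero (α : ℝ) : fA α ![2, 0] = 2 ^ α := by simp [fA]

lemma fA_pair_one_one (α : ℝ) : fA α ![1, 1] = 2 ^ (1 : ℝ) := by norm_num [fA]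

end PowerSums

section MultiplicativeFunctions

variable {φ : ℝ → ℝ} (h1 : φ 1 = 1) (hmul : ∀ x y, 0 < x → 0 < y → φ (x * y) = φ x * φ y)
include h1 hmul

lemma pos_of_map_mul {x : ℝ} (hx : 0 < x) : 0 < φ x := by
  have hsqrt : φ x = φ √x * φ √x := by
    rw [← hmul _ _ (Real.sqrt_pos.2 hx) (Real.sqrt_pos.2 hx), Real.mul_self_sqrt hx.le]
  have hinv : φ x * φ x⁻¹ = 1 := by rw [← hmul _ _ hx (inv_pos.2 hx), mul_inv_cancel₀ hx.ne', h1]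
  exact (hsqrt ▸ mul_self_nonneg _).lt_of_ne' (left_ne_zero_of_mul_eq_one hinv)

lemma map_pow_of_map_mul {x : ℝ} (hx : 0 < x) (n : ℕ) : φ (x ^ n) = φ x ^ n := by
  induction n with
  | zero => simpa using h1
  | succ n ih => rw [pow_succ, hmul _ _ (pow_pos hx n) hx, ih, pow_succ]

lemma monotoneOn_of_map_mul_of_le {C : ℝ} (hC : ∀ x ∈ Set.Ioc 0 1, φ x ≤ C) :
    MonotoneOn φ (Set.Ioi 0) := by
  have hle_one (x : ℝ) (hx : x ∈ Set.Ioc 0 1) : φ x ≤ 1 := by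
    by_contra! hlt
    obtain ⟨n, hn⟩ := pow_unbounded_of_one_lt C hlt
    rw [← map_pow_of_map_mul h1 hmul hx.1] at hn
    exact hn.not_ge (hC _ ⟨pow_pos hx.1 n, pow_le_one₀ hx.1.le hx.2⟩)
  intro x hx y hy hxy
  calc φ x = φ (x / y) * φ y := by rw [← hmul _ _ (div_pos hx hy) hy, div_mul_cancel₀ x hy.ne']
    _ ≤ φ y := mul_le_of_le_one_left (pos_of_map_mul h1 hmul hy).le
        (hle_one _ ⟨div_pos hx hy, (div_le_one hy).2 hxy⟩)

theorem exists_eqOn_rpow_of_map_mul_of_monotoneOn (hmono : MonotoneOn φ (Set.Ioi 0)) :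
    ∃ α : ℝ, 0 ≤ α ∧ Set.EqOn φ (· ^ α) (Set.Ioi 0) := by
  have hpos (t : ℝ) : 0 < φ (Real.exp t) := pos_of_map_mul h1 hmul (Real.exp_pos t)
  let ψ : ℝ →+ ℝ := AddMonoidHom.mk' (fun t => Real.log (φ (Real.exp t))) fun s t => by
    rw [Real.exp_add, hmul _ _ (Real.exp_pos s) (Real.exp_pos t),
      Real.log_mul (hpos s).ne' (hpos t).ne']
  have hψ : Monotone ψ := fun s t hst => Real.log_le_log (hpos s)
    (hmono (Real.exp_pos s) (Real.exp_pos t) (Real.exp_le_exp.2 hst))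
  have hcont : Continuous ψ :=
    MeasureTheory.Measure.AddMonoidHom.continuous_of_measurable ψ hψ.measurable
  have hlin (t : ℝ) : ψ t = t * ψ 1 := by simpa using map_real_smul ψ hcont t 1
  refine ⟨ψ 1, by simpa using hψ zero_le_one, fun x (hx : 0 < x) => ?_⟩
  have hlog : Real.log (φ x) = Real.log x * ψ 1 := by
    rw [← hlin]
    exact congrArg (Real.log ∘ φ) (Real.exp_log hx).symm
  simp only [Real.rpow_def_of_pos hx, ← hlog, Real.exp_log (pos_of_map_mul h1 hmul hx)]

end MultiplicativeFunctions

/-- The function `φ` of the single-entry vectors, `φ x = Φ((x))`, that determines an additive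
functional `Φ`. -/
def entryValue (Φ : ∀ n : ℕ, (Fin n → ℝ) → ℝ) (x : ℝ) : ℝ := Φ 1 fun _ => x

lemma nonnegVec_pair {a b : ℝ} (ha : 0 ≤ a) (hb : 0 ≤ b) : NonnegVec ![a, b] :=
  Fin.forall_fin_two.2 ⟨ha, hb⟩

namespace PhiBase

variable {Φ : ∀ n : ℕ, (Fin n → ℝ) → ℝ} (h : PhiBase Φ)
include h

lemma entryValue_nonneg {x : ℝ} (hx : 0 ≤ x) : 0 ≤ entryValue Φ x := h.1 1 _ fun _ => hx

lemma entryValue_mul {x y : ℝ} (hx : 0 ≤ x) (hy : 0 ≤ y) :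
    entryValue Φ (x * y) = entryValue Φ x * entryValue Φ y :=
  h.2.2.2.2.1 1 1 (fun _ => x) (fun _ => y) (fun _ => hx) fun _ => hy

lemma entryValue_one : entryValue Φ 1 = 1 := h.2.2.2.2.2.1

lemma entryValue_zero : entryValue Φ 0 = 0 := h.2.2.2.2.2.2

lemma map_snoc {n : ℕ} {p : Fin n → ℝ} (hp : NonnegVec p) {x : ℝ} (hx : 0 ≤ x) :
    Φ (n + 1) (Fin.snoc p x) = Φ n p + entryValue Φ x := by
  rw [← Fin.append_right_eq_snoc p fun _ => x]
  exact h.2.2.2.1 n 1 p (fun _ => x) hp fun _ => hx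

lemma eq_sum_entryValue {n : ℕ} {p : Fin n → ℝ} (hp : NonnegVec p) :
    Φ n p = ∑ i, entryValue Φ (p i) := by
  induction n with
  | zero =>
    have hadd := h.2.2.2.1 0 0 p p hp hp
    rw [show Fin.append p p = p from Subsingleton.elim (α := Fin 0 → ℝ) _ _] at hadd
    simpa using hadd
  | succ n ih =>
    rw [Fin.sum_univ_castSucc, ← ih fun i => hp i.castSucc, ← h.map_snoc (fun _ => hp _) (hp _)]
    exact congrArg _ (Fin.snoc_init_self p).symm

lemma map_pair {a b : ℝ} (ha : 0 ≤ a) (hb : 0 ≤ b) :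
    Φ 2 ![a, b] = entryValue Φ a + entryValue Φ b := by
  simp [h.eq_sum_entryValue (nonnegVec_pair ha hb)]

theorem exists_eq_fA_of_entryValue_le {C : ℝ} (hC : ∀ x ∈ Set.Ioc 0 1, entryValue Φ x ≤ C) :
    ∃ α : ℝ, 0 ≤ α ∧ ∀ (n : ℕ) (p : Fin n → ℝ), NonnegVec p → Φ n p = fA α p := by
  have hmul (x y : ℝ) (hx : 0 < x) (hy : 0 < y) := h.entryValue_mul hx.le hy.le
  obtain ⟨α, hα, hpow⟩ := exists_eqOn_rpow_of_map_mul_of_monotoneOn h.entryValue_one hmul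
    (monotoneOn_of_map_mul_of_le h.entryValue_one hmul hC)
  refine ⟨α, hα, fun n p hp => (h.eq_sum_entryValue hp).trans (sum_congr rfl fun i _ => ?_)⟩
  split_ifs with hi
  · rw [hi, h.entryValue_zero]
  · exact hpow ((hp i).lt_of_ne' hi)

theorem exists_eq_fA_of_antitone
    (hanti : ∀ (m n : ℕ) (p : Fin m → ℝ) (q : Fin n → ℝ), NonnegVec p → NonnegVec q →
      Majorizes p q → Φ m p ≤ Φ n q) :
    ∃ α : ℝ, 0 ≤ α ∧ α ≤ 1 ∧ ∀ (n : ℕ) (p : Fin n → ℝ), NonnegVec p → Φ n p = fA α p := by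
  have hpair {x : ℝ} (hx₀ : 0 ≤ x) (hx₁ : x ≤ 1) : Φ 2 ![2 - x, x] ≤ Φ 2 ![1, 1] :=
    hanti 2 2 _ _ (nonnegVec_pair (by linarith) hx₀) (nonnegVec_pair zero_le_one zero_le_one)
      (majorizes_pair (by ring) (by linarith) (by linarith))
  have hbound (x : ℝ) (hx : x ∈ Set.Ioc 0 1) : entryValue Φ x ≤ Φ 2 ![1, 1] := by
    have hx' : 0 ≤ 2 - x := by linarith [hx.2]
    linarith [hpair hx.1.le hx.2, h.map_pair hx' hx.1.le, h.entryValue_nonneg hx']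
  obtain ⟨α, hα, hΦ⟩ := h.exists_eq_fA_of_entryValue_le hbound
  refine ⟨α, hα, (Real.rpow_le_rpow_left_iff one_lt_two).1 ?_, hΦ⟩
  rw [← fA_pair_two_zero α, ← fA_pair_one_one α, ← hΦ _ _ (nonnegVec_pair zero_le_two le_rfl),
    ← hΦ _ _ (nonnegVec_pair zero_le_one zero_le_one)]
  simpa using hpair le_rfl zero_le_one

theorem exists_eq_fA_of_monotone
    (hmono : ∀ (m n : ℕ) (p : Fin m → ℝ) (q : Fin n → ℝ), NonnegVec p → NonnegVec q →
      Majorizes p q → Φ n q ≤ Φ m p) :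
    ∃ α : ℝ, 1 ≤ α ∧ ∀ (n : ℕ) (p : Fin n → ℝ), NonnegVec p → Φ n p = fA α p := by
  have hpair {x y : ℝ} (hx : 0 ≤ x) (hy : 0 ≤ y) : Φ 2 ![x, y] ≤ Φ 2 ![x + y, 0] :=
    hmono 2 2 _ _ (nonnegVec_pair (by linarith) le_rfl) (nonnegVec_pair hx hy)
      (majorizes_pair (by ring) (by linarith) (by linarith))
  have hbound (x : ℝ) (hx : x ∈ Set.Ioc 0 1) : entryValue Φ x ≤ Φ 2 ![1, 0] := by
    have hx' : 0 ≤ 1 - x := by linarith [hx.2]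
    have hle := hpair hx.1.le hx'
    rw [add_sub_cancel, h.map_pair hx.1.le hx'] at hle
    linarith [h.entryValue_nonneg hx']
  obtain ⟨α, -, hΦ⟩ := h.exists_eq_fA_of_entryValue_le hbound
  refine ⟨α, (Real.rpow_le_rpow_left_iff one_lt_two).1 ?_, hΦ⟩
  rw [← fA_pair_one_one α, ← fA_pair_two_zero α, ← hΦ _ _ (nonnegVec_pair zero_le_two le_rfl),
    ← hΦ _ _ (nonnegVec_pair zero_le_one zero_le_one), ← one_add_one_eq_two]
  exact hpair zero_le_one zero_le_one

end PhiBase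

/-- **Classification of monotone homomorphisms on the majorization
semiring.**  A homomorphism that is antitone for majorization `≽₁` is `f_α`
for some `α ∈ [0,1]`, and one that is monotone for `≽₁` is `f_α` for some
`α ∈ [1,∞)`; conversely all these `f_α` have the listed properties. -/
theorem classification_monotone_homs_majorization :
    (∀ Φ : ∀ n : ℕ, (Fin n → ℝ) → ℝ, PhiBase Φ →
      (∀ (m n : ℕ) (p : Fin m → ℝ) (q : Fin n → ℝ), NonnegVec p → NonnegVec q →
        Majorizes p q → Φ m p ≤ Φ n q) →
      ∃ α : ℝ, 0 ≤ α ∧ α ≤ 1 ∧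
        ∀ (n : ℕ) (p : Fin n → ℝ), NonnegVec p → Φ n p = fA α p) ∧
    (∀ α : ℝ, 0 ≤ α → α ≤ 1 →
      PhiBase (fun n p => fA α p) ∧
      ∀ (m n : ℕ) (p : Fin m → ℝ) (q : Fin n → ℝ), NonnegVec p → NonnegVec q →
        Majorizes p q → fA α p ≤ fA α q) ∧
    (∀ Φ : ∀ n : ℕ, (Fin n → ℝ) → ℝ, PhiBase Φ →
      (∀ (m n : ℕ) (p : Fin m → ℝ) (q : Fin n → ℝ), NonnegVec p → NonnegVec q →
        Majorizes p q → Φ n q ≤ Φ m p) →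
      ∃ α : ℝ, 1 ≤ α ∧
        ∀ (n : ℕ) (p : Fin n → ℝ), NonnegVec p → Φ n p = fA α p) ∧
    (∀ α : ℝ, 1 ≤ α →
      PhiBase (fun n p => fA α p) ∧
      ∀ (m n : ℕ) (p : Fin m → ℝ) (q : Fin n → ℝ), NonnegVec p → NonnegVec q →
        Majorizes p q → fA α q ≤ fA α p) := by
  refine ⟨fun Φ hΦ hanti => hΦ.exists_eq_fA_of_antitone hanti, fun α hα₀ hα₁ => ?_,
    fun Φ hΦ hmono => hΦ.exists_eq_fA_of_monotone hmono, fun α hα => ?_⟩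
  · exact ⟨phiBase_fA α, fun _ _ _ _ hp hq h => h.fA_le_fA_of_le_one hp hq hα₀ hα₁⟩
  · exact ⟨phiBase_fA α, fun _ _ _ _ hp hq h => h.fA_le_fA_of_one_le hp hq hα⟩
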